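/- Provided 4ρ < n^{1/d}, one has Var(V) = n ∫_{B_{2ρ}(𝟎)} (1 − ρ^d ω_d(|y|/ρ)/n)^n dy + n(n − 2^d φ)(1 − 2φ/n)^n − n² (1 − φ/n)^{2n}, where the integral is over the toroidal ball B_{2ρ}(𝟎) ⊂ C_n and |y| denotes the toroidal distance from y to 𝟎. -/

import Mathlib

open MeasureTheory ProbabilityTheory Filter Set Metric
open scoped ENNReal NNReal BigOperators Topology Classical

noncomputable section

/-- Side length `n^(1/d)` of the cube `C_n` of volume `n` in dimension `d`. -/
def sideLen (d n : ℕ) : ℝ := (n : ℝ) ^ ((d : ℝ)⁻¹)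

/-- The cube `C_n = [0, L)^d`. -/
def box (d : ℕ) (L : ℝ) : Set (Fin d → ℝ) := Set.univ.pi fun _ => Set.Ico (0 : ℝ) L

/-- The Euclidean toroidal distance on the cube `[0, L)^d`. -/
def torDist {d : ℕ} (L : ℝ) (x y : Fin d → ℝ) : ℝ :=
  Real.sqrt (∑ i, (⨅ k : ℤ, |x i - y i - k * L|) ^ 2)

/-- The toroidal ball `B_r(x) = {y ∈ C_n : D(x,y) ≤ r}`. -/
def torBall {d : ℕ} (L : ℝ) (x : Fin d → ℝ) (r : ℝ) : Set (Fin d → ℝ) :=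
  {y ∈ box d L | torDist L x y ≤ r}

/-- Addition (translation) in the torus `[0, L)^d`. -/
def torAdd {d : ℕ} (L : ℝ) (y x : Fin d → ℝ) : Fin d → ℝ :=
  fun i => L * Int.fract ((y i + x i) / L)

/-- The uniform probability measure on the cube `[0, L)^d`. -/
def uniformBox (d : ℕ) (L : ℝ) : Measure (Fin d → ℝ) :=
  ((L.toNNReal ^ d)⁻¹ : ℝ≥0) • volume.restrict (box d L)

/-- The joint law of `n` independent points uniformly distributed on the cube `C_n`
of volume `n`; a point configuration is `ω : Fin n → (Fin d → ℝ)`, with `U_i = ω i`. -/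
def binppLaw (d n : ℕ) : Measure (Fin n → Fin d → ℝ) :=
  Measure.pi fun _ => uniformBox d (sideLen d n)

/-- The total covered volume `V` of the union of toroidal balls of radius `ρ`
centered at the `n` points. -/
def coveredVol (d n : ℕ) (ρ : ℝ) (ω : Fin n → Fin d → ℝ) : ℝ :=
  (volume (⋃ i, torBall (sideLen d n) (ω i) ρ)).toReal

/-- The number `S` of isolated points: indices `i` with `𝒰_n ∩ B_ρ(U_i) = {U_i}`. -/
def isolCount (d n : ℕ) (ρ : ℝ) (ω : Fin n → Fin d → ℝ) : ℝ :=
  ∑ i, if Set.range ω ∩ torBall (sideLen d n) (ω i) ρ = {ω i} then 1 else 0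

/-- `π_d`: the volume of the unit ball in `ℝ^d`. -/
def unitBallVol (d : ℕ) : ℝ :=
  (volume (Metric.closedBall (0 : EuclideanSpace ℝ (Fin d)) 1)).toReal

/-- `φ = π_d ρ^d`. -/
def phi (d : ℕ) (ρ : ℝ) : ℝ := unitBallVol d * ρ ^ d

/-- The standard normal cumulative distribution function. -/
def stdGaussCDF (t : ℝ) : ℝ := (gaussianReal 0 1 (Set.Iic t)).toReal

/-- The Kolmogorov distance `D_X` between the law of the standardized version of `X`
and the standard normal. -/
def kolDist {Ω : Type*} [MeasurableSpace Ω] (P : Measure Ω) (X : Ω → ℝ) : ℝ :=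
  ⨆ t : ℝ,
    |(P {ω | (X ω - ∫ x, X x ∂P) / Real.sqrt (variance X P) ≤ t}).toReal - stdGaussCDF t|

/-- A fixed unit vector in `ℝ^d` (junk value `0` if `d = 0`). -/
def unitVec (d : ℕ) : EuclideanSpace ℝ (Fin d) :=
  if h : 0 < d then EuclideanSpace.single (⟨0, h⟩ : Fin d) 1 else 0

/-- `ω_d(r)`: the volume of the union of two unit balls in `ℝ^d` whose centers are
at distance `r` apart. -/
def omegaVol (d : ℕ) (r : ℝ) : ℝ :=
  (volume (Metric.closedBall (0 : EuclideanSpace ℝ (Fin d)) 1 ∪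
      Metric.closedBall (r • unitVec d) 1)).toReal

/-- The integral `J_{r,d}(ρ) = d π_d ∫_0^r exp(-ρ^d ω_d(t)) t^{d-1} dt`. -/
def Jint (r : ℝ) (d : ℕ) (ρ : ℝ) : ℝ :=
  d * unitBallVol d * ∫ t in (0:ℝ)..r, Real.exp (-(ρ ^ d * omegaVol d t)) * t ^ (d - 1)

/-- The limiting variance density `g_V(ρ)`. -/
def gV (d : ℕ) (ρ : ℝ) : ℝ :=
  ρ ^ d * Jint 2 d ρ - (2 ^ d * phi d ρ + phi d ρ ^ 2) * Real.exp (-(2 * phi d ρ))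

/-- The limiting variance density `g_S(ρ)`. -/
def gS (d : ℕ) (ρ : ℝ) : ℝ :=
  Real.exp (-phi d ρ) - (1 + (2 ^ d - 2) * phi d ρ + phi d ρ ^ 2) * Real.exp (-(2 * phi d ρ))
    + ρ ^ d * (Jint 2 d ρ - Jint 1 d ρ)

/-- `κ_d`: the maximum number of closed unit balls in `ℝ^d` that can be packed so that
they all intersect a closed unit ball at the origin but are pairwise disjoint. -/
def kappa (d : ℕ) : ℕ :=
  sSup {k : ℕ | ∃ c : Fin k → EuclideanSpace ℝ (Fin d),
    (∀ i, (Metric.closedBall (c i) 1 ∩ Metric.closedBall 0 1).Nonempty) ∧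
    Pairwise fun i j => Disjoint (Metric.closedBall (c i) 1) (Metric.closedBall (c j) 1)}

/-- `η_V(n, ρ)`. -/
def etaV (d n : ℕ) (ρ : ℝ) : ℝ :=
  2 * phi d ρ ^ 2 * ((3 ^ d + 1) * phi d ρ + 1) ^ 2 *
      (1 + (2 ^ d + 1) * 6 ^ d * phi d ρ +
        ((2 * n - 6 ^ d * phi d ρ) / (n - 6 ^ d * phi d ρ)) * 6 ^ (2 * d) * phi d ρ ^ 2) +
    2 * phi d ρ ^ 4 *
      (3 * (4 ^ d + 2 ^ d) * phi d ρ +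
        3 * 4 ^ d * phi d ρ ^ 2 * ((2 * n - 3 * 2 ^ d * phi d ρ) / (n - 3 * 2 ^ d * phi d ρ)) +
        4 + 2 / n)

/-- `η_S(n, ρ)`. -/
def etaS (d n : ℕ) (ρ : ℝ) : ℝ :=
  2 * (1 + 2 * (kappa d : ℝ)) ^ 2 *
      (1 + (2 ^ d + 1) * 3 ^ d * phi d ρ +
        ((2 * n - 3 ^ d * phi d ρ) / (n - 3 ^ d * phi d ρ)) * 9 ^ d * phi d ρ ^ 2) +
    (((1 : ℝ) + kappa d) ^ 2 / 2) *
      ((2 ^ d + 2 * 3 ^ d + 3) * phi d ρ +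
        (2 ^ (d + 1) + 1) *
          ((2 * n - (2 ^ (d + 1) + 1) * phi d ρ) / (n - (2 ^ (d + 1) + 1) * phi d ρ)) *
          phi d ρ ^ 2 +
        (4 * n - 2) / (n - 1))

/-!
The covered and the vacant volume have the same variance, and Fubini's theorem turns the first two
moments of the vacant volume into integrals of the probabilities that one, or two, given points are
vacant.

The points `x` and `y` are both vacant exactly when no `U_i` lies in `B_ρ(x) ∪ B_ρ(y)`. On the flat
torus this union has the same volume as `B_ρ(0) ∪ B_ρ(y - x)`, so the double integral collapses to a
single one over `z = y - x`. If `z` lies outside `B_{2ρ}(0)`, the two balls are disjoint and the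
integrand is constant. Otherwise both balls lie in a ball of radius `2ρ`; since `4ρ` is less than
the side of the torus, they lift to `ℝ^d` without change of volume, where scaling and a reflection
give `ρ^d ω_d(|z| / ρ)`.
-/

section RandomCovering

variable {E F ι : Type*} [MeasurableSpace E] [MeasurableSpace F] {A : Set (E × F)}

lemma measurableSet_setOf_forall_mem [Countable ι] (hA : MeasurableSet A) :
    MeasurableSet {p : (ι → E) × F | ∀ i, (p.1 i, p.2) ∈ A} := by
  simp only [ofPred_forall]
  exact .iInter fun i ↦ hA.preimage (by fun_prop)

lemma measurable_measureReal_forall_mem [Countable ι] (μ : Measure F) [SFinite μ]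
    (hA : MeasurableSet A) :
    Measurable fun ω : ι → E ↦ μ.real {x | ∀ i, (ω i, x) ∈ A} :=
  (measurable_measure_prodMk_left (measurableSet_setOf_forall_mem hA)).ennreal_toReal

lemma measureReal_exists_mem [Countable ι] (μ : Measure F) [IsFiniteMeasure μ]
    (hA : MeasurableSet A) (ω : ι → E) :
    μ.real {x | ∃ i, (ω i, x) ∈ A} = μ.real univ - μ.real {x | ∀ i, (ω i, x) ∈ Aᶜ} := by
  have hm : MeasurableSet {x | ∀ i, (ω i, x) ∈ Aᶜ} :=
    (measurableSet_setOf_forall_mem hA.compl).preimage measurable_prodMk_left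
  rw [← measureReal_compl hm]
  congr 1
  ext x
  simp

lemma measurable_measureReal_exists_mem [Countable ι] (μ : Measure F) [IsFiniteMeasure μ]
    (hA : MeasurableSet A) :
    Measurable fun ω : ι → E ↦ μ.real {x | ∃ i, (ω i, x) ∈ A} := by
  simp only [measureReal_exists_mem μ hA]
  exact (measurable_measureReal_forall_mem μ hA.compl).const_sub _

variable [Fintype ι]

lemma integral_measureReal_forall_mem (ν : Measure E) [IsFiniteMeasure ν]
    (μ : Measure F) [IsFiniteMeasure μ] (hA : MeasurableSet A) :
    ∫ ω : ι → E, μ.real {x | ∀ i, (ω i, x) ∈ A} ∂Measure.pi (fun _ ↦ ν) =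
      ∫ x, ν.real {u | (u, x) ∈ A} ^ Fintype.card ι ∂μ := by
  have hS := measurableSet_setOf_forall_mem (ι := ι) hA
  have hpi (x : F) : Measure.pi (fun _ : ι ↦ ν) {ω | ∀ i, (ω i, x) ∈ A} =
      ν {u | (u, x) ∈ A} ^ Fintype.card ι := by
    simpa [Set.pi] using Measure.pi_pi (fun _ : ι ↦ ν) fun _ ↦ {u | (u, x) ∈ A}
  have hμ : Measurable fun ω : ι → E ↦ μ {x | ∀ i, (ω i, x) ∈ A} :=
    measurable_measure_prodMk_left hS
  have hν : Measurable fun x ↦ ν {u | (u, x) ∈ A} := measurable_measure_prodMk_right hA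
  simp only [measureReal_def, ← ENNReal.toReal_pow]
  rw [integral_toReal hμ.aemeasurable (ae_of_all _ fun _ ↦ measure_lt_top _ _),
    integral_toReal (hν.pow_const _).aemeasurable
      (ae_of_all _ fun _ ↦ ENNReal.pow_lt_top (measure_lt_top _ _))]
  congr 1
  calc ∫⁻ ω, μ {x | ∀ i, (ω i, x) ∈ A} ∂Measure.pi (fun _ : ι ↦ ν)
      = (Measure.pi fun _ ↦ ν).prod μ {p : (ι → E) × F | ∀ i, (p.1 i, p.2) ∈ A} :=
        (Measure.prod_apply hS).symm
    _ = ∫⁻ x, Measure.pi (fun _ : ι ↦ ν) {ω | ∀ i, (ω i, x) ∈ A} ∂μ :=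
        Measure.prod_apply_symm hS
    _ = ∫⁻ x, ν {u | (u, x) ∈ A} ^ Fintype.card ι ∂μ := by simp only [hpi]

variable (ν : Measure E) [IsProbabilityMeasure ν] (μ : Measure F) [IsFiniteMeasure μ]

lemma variance_measureReal_forall_mem (hA : MeasurableSet A) :
    Var[fun ω : ι → E ↦ μ.real {x | ∀ i, (ω i, x) ∈ A}; Measure.pi fun _ ↦ ν] =
      ∫ p, ν.real {u | (u, p.1) ∈ A ∧ (u, p.2) ∈ A} ^ Fintype.card ι ∂μ.prod μ -
        (∫ x, ν.real {u | (u, x) ∈ A} ^ Fintype.card ι ∂μ) ^ 2 := by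
  have hA₂ : MeasurableSet {q : E × F × F | (q.1, q.2.1) ∈ A ∧ (q.1, q.2.2) ∈ A} :=
    (hA.preimage (by fun_prop)).inter (hA.preimage (by fun_prop))
  have hsq (ω : ι → E) : μ.real {x | ∀ i, (ω i, x) ∈ A} ^ 2 =
      (μ.prod μ).real {p | ∀ i, (ω i, p.1) ∈ A ∧ (ω i, p.2) ∈ A} := by
    rw [sq, ← measureReal_prod_prod]
    congr 1
    ext p
    simp [forall_and]
  have hL2 : MemLp (fun ω : ι → E ↦ μ.real {x | ∀ i, (ω i, x) ∈ A}) 2 (Measure.pi fun _ ↦ ν) :=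
    .of_bound (measurable_measureReal_forall_mem μ hA).aestronglyMeasurable (μ.real univ)
      (ae_of_all _ fun ω ↦ by
        rw [Real.norm_of_nonneg measureReal_nonneg]
        exact measureReal_mono (subset_univ _))
  rw [variance_eq_sub hL2, integral_measureReal_forall_mem ν μ hA]
  simp only [Pi.pow_apply, hsq]
  exact congrArg (· - _) (integral_measureReal_forall_mem ν (μ.prod μ) hA₂)

lemma variance_measureReal_exists_mem (hA : MeasurableSet A) :
    Var[fun ω : ι → E ↦ μ.real {x | ∃ i, (ω i, x) ∈ A}; Measure.pi fun _ ↦ ν] =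
      ∫ p, (1 - ν.real {u | (u, p.1) ∈ A ∨ (u, p.2) ∈ A}) ^ Fintype.card ι ∂μ.prod μ -
        (∫ x, (1 - ν.real {u | (u, x) ∈ A}) ^ Fintype.card ι ∂μ) ^ 2 := by
  have hAx (x : F) : MeasurableSet {u | (u, x) ∈ A} := hA.preimage measurable_prodMk_right
  have hone (x : F) : 1 - ν.real {u | (u, x) ∈ A} = ν.real {u | (u, x) ∈ Aᶜ} :=
    (probReal_compl_eq_one_sub (hAx x)).symm
  have htwo (p : F × F) : 1 - ν.real {u | (u, p.1) ∈ A ∨ (u, p.2) ∈ A} =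
      ν.real {u | (u, p.1) ∈ Aᶜ ∧ (u, p.2) ∈ Aᶜ} := by
    rw [ofPred_or, ← probReal_compl_eq_one_sub ((hAx p.1).union (hAx p.2)), compl_union]
    rfl
  simp only [measureReal_exists_mem μ hA, hone, htwo]
  rw [variance_const_sub (measurable_measureReal_forall_mem μ hA.compl).aestronglyMeasurable,
    variance_measureReal_forall_mem ν μ hA.compl]

end RandomCovering

section UnionOfBalls

section PseudoMetric

variable {X ι : Type*} [PseudoMetricSpace X]

lemma iUnion_closedBall_eq_setOf (ω : ι → X) (ρ : ℝ) :
    ⋃ i, closedBall (ω i) ρ = {x | ∃ i, dist (ω i) x ≤ ρ} := by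
  ext x
  simp [dist_comm]

variable [MeasurableSpace X] [OpensMeasurableSpace X] [SecondCountableTopology X]

lemma measurableSet_setOf_dist_le (ρ : ℝ) :
    MeasurableSet {p : X × X | dist p.1 p.2 ≤ ρ} :=
  measurableSet_le measurable_dist measurable_const

lemma measurable_measureReal_iUnion_closedBall [Countable ι] (μ : Measure X) [IsFiniteMeasure μ]
    (ρ : ℝ) : Measurable fun ω : ι → X ↦ μ.real (⋃ i, closedBall (ω i) ρ) := by
  simp only [iUnion_closedBall_eq_setOf]
  exact measurable_measureReal_exists_mem μ (measurableSet_setOf_dist_le ρ)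

lemma measurable_measureReal_closedBall_union (μ : Measure X) [SFinite μ] (c : X) (ρ : ℝ) :
    Measurable fun z ↦ μ.real (closedBall c ρ ∪ closedBall z ρ) := by
  have h : MeasurableSet {p : X × X | dist p.2 c ≤ ρ ∨ dist p.2 p.1 ≤ ρ} := by
    rw [ofPred_or]
    exact (measurableSet_le (by fun_prop) measurable_const).union
      (measurableSet_le (by fun_prop) measurable_const)
  exact (measurable_measure_prodMk_left h).ennreal_toReal

end PseudoMetric

lemma integral_prod_neg_add {G E : Type*} [AddGroup G] [MeasurableSpace G] [MeasurableAdd₂ G]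
    [MeasurableNeg G] [NormedAddCommGroup E] [NormedSpace ℝ E] (μ ν : Measure G) [SFinite μ]
    [SFinite ν] [ν.IsAddLeftInvariant] (f : G → E) :
    ∫ p : G × G, f (-p.1 + p.2) ∂μ.prod ν = μ.real univ • ∫ z, f z ∂ν :=
  calc ∫ p : G × G, f (-p.1 + p.2) ∂μ.prod ν = ∫ p : G × G, f p.2 ∂μ.prod ν :=
        (measurePreserving_prod_neg_add μ ν).integral_comp'
          (f := (MeasurableEquiv.shearAddRight G).symm) fun p ↦ f p.2
    _ = μ.real univ • ∫ z, f z ∂ν := integral_fun_snd f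

variable {G ι : Type*} [SeminormedAddCommGroup G] [MeasurableSpace G] [BorelSpace G]

lemma measureReal_closedBall_eq_closedBall_zero (μ : Measure G) [μ.IsAddLeftInvariant]
    (x : G) (ρ : ℝ) :
    μ.real (closedBall x ρ) = μ.real (closedBall 0 ρ) := by
  rw [measureReal_def, measureReal_def, ← measure_preimage_add μ x, preimage_add_closedBall,
    sub_self]

lemma measureReal_closedBall_union_closedBall_eq (μ : Measure G)
    [μ.IsAddLeftInvariant] (x y : G) (ρ : ℝ) :
    μ.real (closedBall x ρ ∪ closedBall y ρ) = μ.real (closedBall 0 ρ ∪ closedBall (-x + y) ρ) := by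
  rw [measureReal_def, measureReal_def, ← measure_preimage_add μ x, preimage_union,
    preimage_add_closedBall, preimage_add_closedBall, sub_self, neg_add_eq_sub]

variable [SecondCountableTopology G]

lemma integrable_one_sub_measureReal_union_closedBall_pow
    (μ : Measure G) [IsFiniteMeasure μ] (ρ : ℝ) (N : ℕ) :
    Integrable (fun z : G ↦
      (1 - μ.real (closedBall 0 ρ ∪ closedBall z ρ) / μ.real univ) ^ N) μ := by
  refine .of_bound (C := 1) ((((measurable_measureReal_closedBall_union μ 0 ρ).div_const
    _).const_sub 1).pow_const N).aestronglyMeasurable (ae_of_all _ fun z ↦ ?_)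
  have hle : μ.real (closedBall 0 ρ ∪ closedBall z ρ) / μ.real univ ≤ 1 :=
    div_le_one_of_le₀ (measureReal_mono (subset_univ _)) measureReal_nonneg
  rw [Real.norm_of_nonneg (pow_nonneg (sub_nonneg.2 hle) N)]
  exact pow_le_one₀ (sub_nonneg.2 hle) (sub_le_self _ (by positivity))

variable (μ : Measure G) [IsFiniteMeasure μ] [μ.IsAddLeftInvariant]

theorem variance_measureReal_iUnion_closedBall [Fintype ι] [NeZero μ] (ρ : ℝ) :
    Var[fun ω : ι → G ↦ μ.real (⋃ i, closedBall (ω i) ρ);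
        Measure.pi fun _ ↦ (μ univ)⁻¹ • μ] =
      μ.real univ * ∫ z, (1 - μ.real (closedBall 0 ρ ∪ closedBall z ρ) / μ.real univ) ^
          Fintype.card ι ∂μ -
        μ.real univ ^ 2 * (1 - μ.real (closedBall (0 : G) ρ) / μ.real univ) ^
          (2 * Fintype.card ι) := by
  set ν := (μ univ)⁻¹ • μ
  have hν (s : Set G) : ν.real s = μ.real s / μ.real univ := by
    rw [measureReal_ennreal_smul_apply, ENNReal.toReal_inv, inv_mul_eq_div, measureReal_def μ univ]
  have hone (x : G) : ν.real {u | dist u x ≤ ρ} = μ.real (closedBall 0 ρ) / μ.real univ := by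
    rw [hν, ← measureReal_closedBall_eq_closedBall_zero μ x, closedBall]
  have htwo (x y : G) : ν.real {u | dist u x ≤ ρ ∨ dist u y ≤ ρ} =
      μ.real (closedBall 0 ρ ∪ closedBall (-x + y) ρ) / μ.real univ := by
    rw [hν, ← measureReal_closedBall_union_closedBall_eq, ofPred_or]
    rfl
  have hvar := variance_measureReal_exists_mem (ι := ι) ν μ (measurableSet_setOf_dist_le ρ)
  simp only [mem_ofPred_eq, hone, htwo] at hvar
  simp only [iUnion_closedBall_eq_setOf, hvar, integral_const, smul_eq_mul]
  rw [integral_prod_neg_add μ μ fun z ↦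
    (1 - μ.real (closedBall 0 ρ ∪ closedBall z ρ) / μ.real univ) ^ Fintype.card ι, smul_eq_mul]
  ring

lemma integral_one_sub_measureReal_union_closedBall_pow (ρ : ℝ) (N : ℕ) :
    ∫ z, (1 - μ.real (closedBall 0 ρ ∪ closedBall z ρ) / μ.real univ) ^ N ∂μ =
      (∫ z in closedBall 0 (2 * ρ),
          (1 - μ.real (closedBall 0 ρ ∪ closedBall z ρ) / μ.real univ) ^ N ∂μ) +
        (μ.real univ - μ.real (closedBall (0 : G) (2 * ρ))) *
          (1 - 2 * μ.real (closedBall (0 : G) ρ) / μ.real univ) ^ N := by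
  have hball : MeasurableSet (closedBall (0 : G) (2 * ρ)) := isClosed_closedBall.measurableSet
  have hfar {z : G} (hz : z ∈ (closedBall (0 : G) (2 * ρ))ᶜ) :
      μ.real (closedBall 0 ρ ∪ closedBall z ρ) = 2 * μ.real (closedBall (0 : G) ρ) := by
    have hdisj : Disjoint (closedBall 0 ρ) (closedBall z ρ) :=
      closedBall_disjoint_closedBall (by simpa [two_mul] using hz)
    rw [measureReal_union hdisj isClosed_closedBall.measurableSet,
      measureReal_closedBall_eq_closedBall_zero μ z, two_mul]
  rw [← integral_add_compl hball (integrable_one_sub_measureReal_union_closedBall_pow μ ρ N),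
    setIntegral_congr_fun hball.compl fun z hz ↦ by rw [hfar hz],
    setIntegral_const, measureReal_compl hball, smul_eq_mul]

end UnionOfBalls

section EuclideanBalls

lemma measureReal_closedBall_union_closedBall_of_norm_eq {E : Type*} [NormedAddCommGroup E]
    [InnerProductSpace ℝ E] [FiniteDimensional ℝ E] [MeasurableSpace E] [BorelSpace E] {v w : E}
    (h : ‖v‖ = ‖w‖) (r : ℝ) :
    volume.real (closedBall 0 r ∪ closedBall v r) =
      volume.real (closedBall 0 r ∪ closedBall w r) := by
  let R := (ℝ ∙ (v - w))ᗮ.reflection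
  have hRv : R v = w := Submodule.reflection_sub h
  have hpre : R ⁻¹' (closedBall 0 r ∪ closedBall w r) = closedBall 0 r ∪ closedBall v r := by
    rw [preimage_union, ← hRv, R.preimage_closedBall, R.preimage_closedBall, map_zero,
      R.symm_apply_apply]
  rw [← hpre, R.measurePreserving.measureReal_preimage
    (isClosed_closedBall.union isClosed_closedBall).nullMeasurableSet]

open scoped Pointwise in
lemma measureReal_closedBall_union_closedBall_eq_pow_mul {E : Type*} [NormedAddCommGroup E]
    [NormedSpace ℝ E] [FiniteDimensional ℝ E] [MeasurableSpace E] [BorelSpace E] (μ : Measure E)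
    [μ.IsAddHaarMeasure] {r : ℝ} (hr : 0 < r) (z : E) :
    μ.real (closedBall 0 r ∪ closedBall z r) =
      r ^ Module.finrank ℝ E * μ.real (closedBall 0 1 ∪ closedBall (r⁻¹ • z) 1) := by
  have hsmul : closedBall (0 : E) r ∪ closedBall z r =
      r • (closedBall 0 1 ∪ closedBall (r⁻¹ • z) 1) := by
    simp only [smul_set_union, _root_.smul_closedBall _ _ zero_le_one, smul_zero,
      smul_inv_smul₀ hr.ne', Real.norm_of_nonneg hr.le, mul_one]
  rw [hsmul, measureReal_def, Measure.addHaar_smul, ENNReal.toReal_mul,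
    ENNReal.toReal_ofReal (abs_nonneg _), abs_of_pos (by positivity), measureReal_def]

variable {d : ℕ}

lemma norm_smul_unitVec (z : EuclideanSpace ℝ (Fin d)) : ‖‖z‖ • unitVec d‖ = ‖z‖ := by
  rcases d.eq_zero_or_pos with rfl | hd
  · simp [Subsingleton.elim z 0]
  · simp [unitVec, hd, norm_smul]

lemma volume_real_closedBall_eq_phi (x : EuclideanSpace ℝ (Fin d)) {r : ℝ} (hr : 0 ≤ r) :
    volume.real (closedBall x r) = phi d r := by
  rw [Measure.addHaar_real_closedBall' _ _ hr, finrank_euclideanSpace_fin, mul_comm]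
  rfl

lemma volume_real_closedBall_union_closedBall_eq_omegaVol {ρ : ℝ} (hρ : 0 < ρ)
    (z : EuclideanSpace ℝ (Fin d)) :
    volume.real (closedBall 0 ρ ∪ closedBall z ρ) = ρ ^ d * omegaVol d (‖z‖ / ρ) := by
  have hnorm : ‖ρ⁻¹ • z‖ = ‖(‖z‖ / ρ) • unitVec d‖ := by
    rw [div_eq_inv_mul, mul_smul, norm_smul, norm_smul, norm_smul_unitVec]
  rw [measureReal_closedBall_union_closedBall_eq_pow_mul _ hρ, finrank_euclideanSpace_fin,
    measureReal_closedBall_union_closedBall_of_norm_eq hnorm]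
  rfl

end EuclideanBalls

/-- The flat torus `(ℝ / L ℤ)^d`, with the quotient of the Euclidean distance. -/
abbrev FlatTorus (d : ℕ) (L : ℝ) : Type := PiLp 2 fun _ : Fin d ↦ AddCircle L

namespace FlatTorus

variable {d : ℕ} {L : ℝ}

/-- The covering homomorphism `ℝ^d → (ℝ / L ℤ)^d`. -/
def mk (L : ℝ) : EuclideanSpace ℝ (Fin d) →+ FlatTorus d L where
  toFun x := WithLp.toLp 2 fun i ↦ (x i : AddCircle L)
  map_zero' := rfl
  map_add' _ _ := rfl

lemma norm_mk_le (x : EuclideanSpace ℝ (Fin d)) : ‖mk L x‖ ≤ ‖x‖ := by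
  rw [PiLp.norm_eq_of_L2, EuclideanSpace.norm_eq]
  gcongr with i
  exact QuotientAddGroup.norm_mk_le_norm

lemma exists_mk_eq_norm_eq (t : FlatTorus d L) :
    ∃ x : EuclideanSpace ℝ (Fin d), mk L x = t ∧ ‖x‖ = ‖t‖ := by
  have hcoord (i : Fin d) : ∃ a : ℝ, (a : AddCircle L) = t i ∧ ‖a‖ = ‖t i‖ := by
    obtain ⟨b, hb⟩ := QuotientAddGroup.mk_surjective (t i)
    refine ⟨b - round (L⁻¹ * b) * L, ?_, ?_⟩
    · rw [← hb, AddCircle.coe_sub, ← zsmul_eq_mul, AddCircle.coe_zsmul, AddCircle.coe_period,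
        smul_zero, sub_zero]
    · rw [← hb]
      exact (AddCircle.norm_eq L).symm
  choose x hxt hxnorm using hcoord
  refine ⟨WithLp.toLp 2 x, ?_, ?_⟩
  · ext i
    exact hxt i
  · simp only [PiLp.norm_eq_of_L2, hxnorm]

lemma image_mk_closedBall (w : EuclideanSpace ℝ (Fin d)) (r : ℝ) :
    mk L '' closedBall w r = closedBall (mk L w) r := by
  refine Subset.antisymm (image_subset_iff.2 fun x hx ↦ ?_) fun t ht ↦ ?_
  · rw [mem_preimage, mem_closedBall_iff_norm, ← map_sub]
    exact (norm_mk_le _).trans (mem_closedBall_iff_norm.1 hx)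
  · obtain ⟨x, hxt, hxnorm⟩ := exists_mk_eq_norm_eq (t - mk L w)
    refine ⟨w + x, ?_, ?_⟩
    · rw [mem_closedBall_iff_norm, add_sub_cancel_left, hxnorm]
      exact mem_closedBall_iff_norm.1 ht
    · rw [map_add, hxt, add_sub_cancel]

/-- The Haar measure of total mass `L ^ d` on the flat torus. -/
def haar (d : ℕ) (L : ℝ) [Fact (0 < L)] : Measure (FlatTorus d L) :=
  (volume : Measure (Fin d → AddCircle L)).map (WithLp.toLp 2)

variable [Fact (0 < L)]

lemma measurePreserving_toLp :
    MeasurePreserving (WithLp.toLp 2) (volume : Measure (Fin d → AddCircle L)) (haar d L) :=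
  ⟨WithLp.measurable_toLp _ _, rfl⟩

lemma haar_univ : haar d L univ = ENNReal.ofReal L ^ d := by
  rw [← measurePreserving_toLp.measure_preimage nullMeasurableSet_univ, preimage_univ, volume_pi,
    Measure.pi_univ]
  simp [AddCircle.measure_univ]

instance : IsFiniteMeasure (haar d L) := ⟨by rw [haar_univ]; finiteness⟩

lemma haar_real_univ : (haar d L).real univ = L ^ d := by
  rw [measureReal_def, haar_univ, ENNReal.toReal_pow, ENNReal.toReal_ofReal (Fact.out : 0 < L).le]

instance : NeZero (haar d L) where
  out h := by
    have hmass := haar_univ (d := d) (L := L)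
    simp [h, eq_comm, (Fact.out : 0 < L).not_ge] at hmass

instance : (haar d L).IsAddLeftInvariant :=
  isAddLeftInvariant_map (WithLp.addEquiv 2 (Fin d → AddCircle L)).symm.toAddHom
    (WithLp.measurable_toLp _ _) (WithLp.addEquiv 2 _).symm.surjective

lemma measurePreserving_mk_toLp (a : Fin d → ℝ) :
    MeasurePreserving (fun x : Fin d → ℝ ↦ mk L (WithLp.toLp 2 x))
      (volume.restrict (univ.pi fun i ↦ Ico (a i) (a i + L))) (haar d L) := by
  have hcoord (i : Fin d) : MeasurePreserving ((↑) : ℝ → AddCircle L)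
      (volume.restrict (Ico (a i) (a i + L))) volume := by
    rw [Measure.restrict_congr_set Ico_ae_eq_Ioc]
    exact AddCircle.measurePreserving_mk L (a i)
  have hpi := measurePreserving_pi _ _ hcoord
  rw [← Measure.restrict_pi_pi] at hpi
  exact measurePreserving_toLp.comp hpi

lemma injOn_mk_toLp (a : Fin d → ℝ) :
    InjOn (fun x : Fin d → ℝ ↦ mk L (WithLp.toLp 2 x)) (univ.pi fun i ↦ Ico (a i) (a i + L)) := by
  intro x hx y hy hxy
  ext i
  exact (AddCircle.coe_eq_coe_iff_of_mem_Ico (hx i trivial) (hy i trivial)).1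
    (congrArg (· i) hxy)

lemma haar_real_image_mk {S : Set (EuclideanSpace ℝ (Fin d))} (hS : IsCompact S)
    {c : EuclideanSpace ℝ (Fin d)} {R : ℝ} (hSc : S ⊆ closedBall c R) (hR : 2 * R < L) :
    (haar d L).real (mk L '' S) = volume.real S := by
  have hmk : Continuous (mk L : EuclideanSpace ℝ (Fin d) → FlatTorus d L) :=
    AddMonoidHomClass.continuous_of_bound _ 1 (by simpa using norm_mk_le)
  let a : Fin d → ℝ := fun i ↦ c i - L / 2
  have hcube : WithLp.toLp 2 ⁻¹' S ⊆ univ.pi fun i ↦ Ico (a i) (a i + L) := fun x hx i _ ↦ by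
    have hi := (PiLp.norm_apply_le (WithLp.toLp 2 x - c) i).trans
      (mem_closedBall_iff_norm.1 (hSc hx))
    rw [PiLp.sub_apply, Real.norm_eq_abs, abs_le] at hi
    constructor <;> simp only [a] <;> linarith
  have himage : (fun x ↦ mk L (WithLp.toLp 2 x)) '' (WithLp.toLp 2 ⁻¹' S) = mk L '' S := by
    rw [← image_image (mk L) (WithLp.toLp 2), image_preimage_eq _ (WithLp.toLp_surjective 2)]
  rw [← (measurePreserving_mk_toLp a).measureReal_preimage
      (hS.image hmk).isClosed.nullMeasurableSet,
    measureReal_restrict_apply' (.univ_pi fun _ ↦ measurableSet_Ico), ← himage,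
    (injOn_mk_toLp a).preimage_image_inter hcube,
    (PiLp.volume_preserving_toLp _).measureReal_preimage hS.isClosed.nullMeasurableSet]

end FlatTorus

lemma norm_coe_addCircle_eq_iInf (L a : ℝ) : ‖(a : AddCircle L)‖ = ⨅ k : ℤ, |a - k * L| := by
  have hsurj : Function.Surjective fun k : ℤ ↦
      (⟨k • L, k, rfl⟩ : AddSubgroup.zmultiples L) := fun ⟨_, k, hk⟩ ↦ ⟨k, Subtype.ext hk⟩
  rw [QuotientAddGroup.norm_mk, infDist_eq_iInf]
  simp only [← zsmul_eq_mul]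
  exact (hsurj.iInf_comp _).symm

section Box

variable {d : ℕ} {L : ℝ}

lemma measurableSet_box : MeasurableSet (box d L) := .univ_pi fun _ ↦ measurableSet_Ico

lemma torDist_eq_dist (L : ℝ) (x y : Fin d → ℝ) :
    torDist L x y = dist (FlatTorus.mk L (WithLp.toLp 2 x)) (FlatTorus.mk L (WithLp.toLp 2 y)) := by
  rw [dist_eq_norm, ← map_sub, PiLp.norm_eq_of_L2]
  simp only [torDist, ← norm_coe_addCircle_eq_iInf]
  rfl

lemma torBall_eq_preimage_inter_box (L : ℝ) (x : Fin d → ℝ) (r : ℝ) :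
    torBall L x r = (fun y ↦ FlatTorus.mk L (WithLp.toLp 2 y)) ⁻¹'
      closedBall (FlatTorus.mk L (WithLp.toLp 2 x)) r ∩ box d L := by
  ext y
  simp only [torBall, torDist_eq_dist, mem_ofPred_eq, mem_inter_iff, mem_preimage, mem_closedBall,
    dist_comm, and_comm]

namespace FlatTorus

variable [Fact (0 < L)]

lemma measurePreserving_mk_toLp_box :
    MeasurePreserving (fun x : Fin d → ℝ ↦ mk L (WithLp.toLp 2 x))
      (volume.restrict (box d L)) (haar d L) := by
  simpa [box] using measurePreserving_mk_toLp (0 : Fin d → ℝ)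

lemma measurePreserving_uniformBox :
    MeasurePreserving (fun x : Fin d → ℝ ↦ mk L (WithLp.toLp 2 x))
      (uniformBox d L) ((haar d L univ)⁻¹ • haar d L) := by
  have hmass : (haar d L univ)⁻¹ = (((L.toNNReal ^ d)⁻¹ : ℝ≥0) : ℝ≥0∞) := by
    rw [haar_univ, ENNReal.coe_inv (pow_pos (Real.toNNReal_pos.2 Fact.out) d).ne', ENNReal.coe_pow]
    rfl
  rw [hmass]
  exact measurePreserving_mk_toLp_box.smul_measure _

lemma haar_real_closedBall (t : FlatTorus d L) {r : ℝ} (hr : 0 ≤ r) (hrL : 2 * r < L) :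
    (haar d L).real (closedBall t r) = phi d r := by
  obtain ⟨x, rfl, -⟩ := exists_mk_eq_norm_eq t
  rw [← image_mk_closedBall, haar_real_image_mk (isCompact_closedBall x r) subset_rfl hrL,
    volume_real_closedBall_eq_phi x hr]

lemma haar_real_closedBall_union_closedBall {ρ : ℝ} (hρ : 0 < ρ) (hρL : 4 * ρ < L)
    {t : FlatTorus d L} (ht : ‖t‖ ≤ 2 * ρ) :
    (haar d L).real (closedBall 0 ρ ∪ closedBall t ρ) = ρ ^ d * omegaVol d (‖t‖ / ρ) := by
  obtain ⟨x, rfl, hx⟩ := exists_mk_eq_norm_eq t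
  have hmid : ‖(2⁻¹ : ℝ) • x‖ ≤ ρ := by
    rw [norm_smul, norm_inv, Real.norm_ofNat, hx]
    linarith
  have hsub : closedBall 0 ρ ∪ closedBall x ρ ⊆ closedBall ((2⁻¹ : ℝ) • x) (2 * ρ) := by
    refine union_subset (closedBall_subset_closedBall' ?_) (closedBall_subset_closedBall' ?_)
    · rw [dist_zero_left]
      linarith
    · rw [dist_eq_norm, show x - (2⁻¹ : ℝ) • x = (2⁻¹ : ℝ) • x by module]
      linarith
  rw [← map_zero (mk L), ← image_mk_closedBall, ← image_mk_closedBall, ← image_union,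
    haar_real_image_mk ((isCompact_closedBall 0 ρ).union (isCompact_closedBall x ρ)) hsub
      (by linarith),
    volume_real_closedBall_union_closedBall_eq_omegaVol hρ, hx]

lemma haar_real_iUnion_closedBall {ι : Type*} [Countable ι] (ω : ι → Fin d → ℝ) (r : ℝ) :
    (haar d L).real (⋃ i, closedBall (mk L (WithLp.toLp 2 (ω i))) r) =
      volume.real (⋃ i, torBall L (ω i) r) := by
  have hm : MeasurableSet (⋃ i, closedBall (mk L (WithLp.toLp 2 (ω i))) r) :=
    .iUnion fun i ↦ isClosed_closedBall.measurableSet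
  simp only [torBall_eq_preimage_inter_box]
  rw [← measurePreserving_mk_toLp_box.measureReal_preimage hm.nullMeasurableSet,
    measureReal_restrict_apply' measurableSet_box, preimage_iUnion, iUnion_inter]

lemma setIntegral_closedBall {f : FlatTorus d L → ℝ} (hf : AEStronglyMeasurable f (haar d L))
    (r : ℝ) :
    ∫ t in closedBall 0 r, f t ∂haar d L =
      ∫ y in torBall L 0 r, f (mk L (WithLp.toLp 2 y)) := by
  have hm : MeasurableSet (closedBall (0 : FlatTorus d L) r) := isClosed_closedBall.measurableSet
  have hmk : MeasurePreserving (fun x : Fin d → ℝ ↦ mk L (WithLp.toLp 2 x))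
      (volume.restrict (box d L)) (haar d L) := measurePreserving_mk_toLp_box
  rw [← hmk.map_eq] at hf ⊢
  rw [setIntegral_map hm hf hmk.aemeasurable,
    Measure.restrict_restrict (hmk.measurable hm), torBall_eq_preimage_inter_box,
    WithLp.toLp_zero, map_zero]

end FlatTorus

open FlatTorus in
lemma variance_volume_iUnion_torBall {ι : Type*} [Fintype ι] [Fact (0 < L)] (ρ : ℝ) :
    Var[fun ω : ι → Fin d → ℝ ↦ volume.real (⋃ i, torBall L (ω i) ρ);
        Measure.pi fun _ ↦ uniformBox d L] =
      Var[fun ω : ι → FlatTorus d L ↦ (haar d L).real (⋃ i, closedBall (ω i) ρ);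
        Measure.pi fun _ ↦ (haar d L univ)⁻¹ • haar d L] := by
  have hX : MeasurePreserving (fun (ω : ι → Fin d → ℝ) i ↦ mk L (WithLp.toLp 2 (ω i)))
      (Measure.pi fun _ ↦ uniformBox d L) (Measure.pi fun _ ↦ (haar d L univ)⁻¹ • haar d L) :=
    measurePreserving_pi _ _ fun _ ↦ measurePreserving_uniformBox
  have hV : Measurable fun ω : ι → FlatTorus d L ↦ (haar d L).real (⋃ i, closedBall (ω i) ρ) :=
    measurable_measureReal_iUnion_closedBall (haar d L) ρ
  rw [← hX.variance_fun_comp hV.aemeasurable]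
  simp only [haar_real_iUnion_closedBall]

end Box

lemma phi_two_mul (d : ℕ) (ρ : ℝ) : phi d (2 * ρ) = 2 ^ d * phi d ρ := by
  rw [phi, phi, mul_pow, mul_left_comm]

lemma sideLen_pow {d : ℕ} (hd : d ≠ 0) (n : ℕ) : sideLen d n ^ d = n :=
  Real.rpow_inv_natCast_pow n.cast_nonneg hd

open FlatTorus in
lemma integral_one_sub_haar_real_union_closedBall_pow {d : ℕ} {L : ℝ} [Fact (0 < L)] {ρ : ℝ}
    (hρ : 0 < ρ) (hL : 4 * ρ < L) (N : ℕ) :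
    ∫ t in closedBall 0 (2 * ρ),
        (1 - (haar d L).real (closedBall 0 ρ ∪ closedBall t ρ) / L ^ d) ^ N ∂haar d L =
      ∫ y in torBall L (0 : Fin d → ℝ) (2 * ρ),
        (1 - ρ ^ d * omegaVol d (torDist L 0 y / ρ) / L ^ d) ^ N := by
  have hf := (integrable_one_sub_measureReal_union_closedBall_pow (haar d L) ρ N).1
  rw [haar_real_univ] at hf
  rw [setIntegral_closedBall hf]
  refine setIntegral_congr_fun ?_ fun y hy ↦ ?_
  · rw [torBall_eq_preimage_inter_box]
    exact (measurePreserving_mk_toLp_box.measurable isClosed_closedBall.measurableSet).inter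
      measurableSet_box
  · have hnorm : torDist L 0 y = ‖mk L (WithLp.toLp 2 y)‖ := by
      rw [torDist_eq_dist, WithLp.toLp_zero, map_zero, dist_zero_left]
    simp only [hnorm]
    rw [haar_real_closedBall_union_closedBall hρ hL (hnorm ▸ hy.2)]

open FlatTorus in
theorem variance_coveredVol_formula_general {ι : Type*} [Fintype ι] {d : ℕ} {L ρ : ℝ} (hρ : 0 < ρ)
    (hL : 4 * ρ < L) :
    Var[fun ω : ι → Fin d → ℝ ↦ volume.real (⋃ i, torBall L (ω i) ρ);
        Measure.pi fun _ ↦ uniformBox d L] =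
      L ^ d * (∫ y in torBall L (0 : Fin d → ℝ) (2 * ρ),
          (1 - ρ ^ d * omegaVol d (torDist L 0 y / ρ) / L ^ d) ^ Fintype.card ι) +
        L ^ d * (L ^ d - 2 ^ d * phi d ρ) * (1 - 2 * phi d ρ / L ^ d) ^ Fintype.card ι -
        (L ^ d) ^ 2 * (1 - phi d ρ / L ^ d) ^ (2 * Fintype.card ι) := by
  have : Fact (0 < L) := ⟨by linarith⟩
  rw [variance_volume_iUnion_torBall, variance_measureReal_iUnion_closedBall,
    integral_one_sub_measureReal_union_closedBall_pow, haar_real_univ,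
    integral_one_sub_haar_real_union_closedBall_pow hρ hL,
    haar_real_closedBall 0 hρ.le (by linarith),
    haar_real_closedBall 0 (by positivity) (by linarith), phi_two_mul]
  ring

/-- Formula (7.2) of Goldstein–Penrose: exact variance of the covered volume. -/
theorem variance_coveredVol_formula (d n : ℕ) (hd : 1 ≤ d) (hn : 4 ≤ n) (ρ : ℝ)
    (hρ : 0 < ρ) (h4ρ : 4 * ρ < sideLen d n) :
    variance (coveredVol d n ρ) (binppLaw d n) =
      n * (∫ y in torBall (sideLen d n) (0 : Fin d → ℝ) (2 * ρ),
            (1 - ρ ^ d * omegaVol d (torDist (sideLen d n) (0 : Fin d → ℝ) y / ρ) / n) ^ n ∂volume) +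
        n * ((n : ℝ) - 2 ^ d * phi d ρ) * (1 - 2 * phi d ρ / n) ^ n -
        (n : ℝ) ^ 2 * (1 - phi d ρ / n) ^ (2 * n) := by
  have hvar := variance_coveredVol_formula_general (ι := Fin n) (d := d) hρ h4ρ
  rwa [sideLen_pow (Nat.one_le_iff_ne_zero.1 hd), Fintype.card_fin] at hvar

end
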